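/- If g : (0,∞) → ℝ is convex and continuous, then the perspective function (v, W) ↦ v·φ(v⁻¹W) is convex on the set {(v, W) : v > 0, W real symmetric positive definite}; equivalently, ζ(u, v, W) = u − v·φ(v⁻¹W) is concave in (u, v, W) on ℝ × (0,∞) × {positive definite matrices}. -/

import Mathlib

open Matrix

/-- `φ(W) = tr(g(W)) = ∑ᵢ g(λᵢ(W))` for a Hermitian (symmetric) matrix `W`. -/
noncomputable def phi {d : ℕ} (g : ℝ → ℝ) (W : Matrix (Fin d) (Fin d) ℝ) : ℝ :=
  if h : W.IsHermitian then ∑ i, g (h.eigenvalues i) else 0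

/-- `ζ(u, v, W) = u - v * φ(v⁻¹ W)`. -/
noncomputable def zeta {d : ℕ} (g : ℝ → ℝ) (u v : ℝ) (W : Matrix (Fin d) (Fin d) ℝ) : ℝ :=
  u - v * phi g (v⁻¹ • W)

/-!
Fix an orthonormal basis in which `a A + b B` is diagonal. Its eigenvalues are then the combinations
`a Aⱼⱼ + b Bⱼⱼ` of diagonal entries, so convexity of `g` reduces the convexity of `A ↦ tr(g(A))` to
Peierls' inequality `∑ⱼ g(Aⱼⱼ) ≤ tr(g(A))`. The latter is Jensen's inequality, since by the spectral
theorem the diagonal of `A` is the image of its eigenvalues under the doubly stochastic matrix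
`(|Uⱼᵢ|²)`, with `U` the unitary matrix of eigenvectors. Finally, for `v = a s + b t` one has
`v⁻¹ (a x + b y) = (a s / v) (s⁻¹ x) + (b t / v) (t⁻¹ y)`, a convex combination, so the perspective
of any convex function is convex.
-/

section Perspective

variable {𝕜 E β : Type*} [Field 𝕜] [AddCommGroup E] [Module 𝕜 E]
  [AddCommGroup β] [Module 𝕜 β]

/-- The perspective `(v, x) ↦ v f(v⁻¹ x)` of a function `f`, meaningful for `v ≠ 0`. -/
def perspective (f : E → β) (p : 𝕜 × E) : β :=
  p.1 • f (p.1⁻¹ • p.2)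

theorem inv_combo_smul_combo_eq {s t : 𝕜} (hs : s ≠ 0) (ht : t ≠ 0) (a b : 𝕜) (x y : E) :
    (a * s + b * t)⁻¹ • (a • x + b • y) =
      (a * s / (a * s + b * t)) • s⁻¹ • x + (b * t / (a * s + b * t)) • t⁻¹ • y := by
  simp only [smul_add, smul_smul]
  congr 2 <;> field_simp

theorem convexOn_perspective [LinearOrder 𝕜] [IsStrictOrderedRing 𝕜] [PartialOrder β]
    [PosSMulMono 𝕜 β] {C : Set E} {f : E → β} (hf : ConvexOn 𝕜 C f) :
    ConvexOn 𝕜 {p : 𝕜 × E | 0 < p.1 ∧ p.1⁻¹ • p.2 ∈ C} (perspective f) := by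
  have weights {s t a b : 𝕜} (hs : 0 < s) (ht : 0 < t) (ha : 0 ≤ a) (hb : 0 ≤ b)
      (hab : a + b = 1) :
      0 < a * s + b * t ∧ 0 ≤ a * s / (a * s + b * t) ∧ 0 ≤ b * t / (a * s + b * t) ∧
        a * s / (a * s + b * t) + b * t / (a * s + b * t) = 1 := by
    have hv : 0 < a * s + b * t := convex_Ioi (0 : 𝕜) hs ht ha hb hab
    exact ⟨hv, by positivity, by positivity, by rw [← add_div, div_self hv.ne']⟩
  refine ⟨?_, ?_⟩
  · rintro ⟨s, x⟩ ⟨hs, hx⟩ ⟨t, y⟩ ⟨ht, hy⟩ a b ha hb hab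
    obtain ⟨hv, ha', hb', hab'⟩ := weights hs ht ha hb hab
    refine ⟨hv, ?_⟩
    change (a * s + b * t)⁻¹ • (a • x + b • y) ∈ C
    rw [inv_combo_smul_combo_eq hs.ne' ht.ne']
    exact hf.1 hx hy ha' hb' hab'
  · rintro ⟨s, x⟩ ⟨hs, hx⟩ ⟨t, y⟩ ⟨ht, hy⟩ a b ha hb hab
    obtain ⟨hv, ha', hb', hab'⟩ := weights hs ht ha hb hab
    calc (a * s + b * t) • f ((a * s + b * t)⁻¹ • (a • x + b • y))
        ≤ (a * s + b * t) • ((a * s / (a * s + b * t)) • f (s⁻¹ • x) +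
            (b * t / (a * s + b * t)) • f (t⁻¹ • y)) := by
          rw [inv_combo_smul_combo_eq hs.ne' ht.ne']
          exact smul_le_smul_of_nonneg_left (hf.2 hx hy ha' hb' hab') hv.le
      _ = a • s • f (s⁻¹ • x) + b • t • f (t⁻¹ • y) := by
          simp only [smul_add, smul_smul, mul_div_cancel₀ _ hv.ne']

end Perspective

theorem concaveOn_fst_sub_comp_snd {R E β : Type*} [Semiring R] [PartialOrder R]
    [AddCommMonoid E] [Module R E] [AddCommGroup β] [PartialOrder β] [IsOrderedAddMonoid β]
    [Module R β] {C : Set E} {f : E → β} (hf : ConvexOn R C f) :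
    ConcaveOn R {q : β × E | q.2 ∈ C} (fun q => q.1 - f q.2) :=
  have hsnd := hf.comp_linearMap (LinearMap.snd R β E)
  ((LinearMap.fst R β E).concaveOn hsnd.1).sub hsnd

section DoublyStochastic

variable {n : Type*} [Fintype n] [DecidableEq n]

theorem sum_map_sum_smul_le_of_mem_doublyStochastic {𝕜 E β : Type*} [Field 𝕜]
    [LinearOrder 𝕜] [IsStrictOrderedRing 𝕜] [AddCommGroup E] [Module 𝕜 E]
    [AddCommGroup β] [PartialOrder β] [IsOrderedAddMonoid β] [Module 𝕜 β]
    [IsStrictOrderedModule 𝕜 β] {C : Set E} {f : E → β} (hf : ConvexOn 𝕜 C f)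
    {M : Matrix n n 𝕜} (hM : M ∈ doublyStochastic 𝕜 n) {x : n → E} (hx : ∀ i, x i ∈ C) :
    ∑ j, f (∑ i, M j i • x i) ≤ ∑ i, f (x i) :=
  calc ∑ j, f (∑ i, M j i • x i)
      ≤ ∑ j, ∑ i, M j i • f (x i) := Finset.sum_le_sum fun j _ =>
        hf.map_sum_le (fun _ _ => nonneg_of_mem_doublyStochastic hM)
          (sum_row_of_mem_doublyStochastic hM j) fun i _ => hx i
    _ = ∑ i, (∑ j, M j i) • f (x i) := by
        simp only [Finset.sum_smul]
        exact Finset.sum_comm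
    _ = ∑ i, f (x i) := by
        simp only [sum_col_of_mem_doublyStochastic hM, one_smul]

variable {𝕜 : Type*} [RCLike 𝕜]

theorem map_norm_sq_mem_doublyStochastic (U : unitaryGroup n 𝕜) :
    (U : Matrix n n 𝕜).map (fun z => ‖z‖ ^ 2) ∈ doublyStochastic ℝ n := by
  have sum_row (V : unitaryGroup n 𝕜) (i : n) : ∑ j, ‖(V : Matrix n n 𝕜) i j‖ ^ 2 = 1 := by
    have h : ((V : Matrix n n 𝕜) * star (V : Matrix n n 𝕜)) i i = (1 : Matrix n n 𝕜) i i :=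
      congrFun₂ (Unitary.coe_mul_star_self V) i i
    simp only [mul_apply, star_apply, RCLike.star_def, RCLike.mul_conj, one_apply_eq] at h
    exact_mod_cast h
  refine mem_doublyStochastic_iff_sum.2 ⟨fun _ _ => sq_nonneg _, sum_row U, fun j => ?_⟩
  simpa [star_apply] using sum_row (star U) j

theorem exists_mem_doublyStochastic_re_diag_eq {A : Matrix n n 𝕜} (hA : A.IsHermitian) :
    ∃ M ∈ doublyStochastic ℝ n, ∀ j, RCLike.re (A j j) = ∑ i, M j i • hA.eigenvalues i := by
  refine ⟨_, map_norm_sq_mem_doublyStochastic hA.eigenvectorUnitary, fun j => ?_⟩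
  let U : Matrix n n 𝕜 := hA.eigenvectorUnitary.1
  have entry : A j j = ((∑ i, ‖U j i‖ ^ 2 * hA.eigenvalues i : ℝ) : 𝕜) := by
    conv_lhs => rw [hA.spectral_theorem, Unitary.conjStarAlgAut_apply]
    rw [Matrix.mul_apply]
    simp only [mul_diagonal, star_apply, RCLike.star_def, Function.comp_apply,
      mul_right_comm, RCLike.mul_conj]
    push_cast
    rfl
  exact (congrArg RCLike.re entry).trans (RCLike.ofReal_re _)

end DoublyStochastic

section TraceFunction

variable {m n 𝕜 : Type*} [Fintype m] [DecidableEq m] [Fintype n] [DecidableEq n] [RCLike 𝕜]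

variable (n 𝕜) in
/-- The Hermitian `n × n` matrices all of whose eigenvalues lie in `s`, the natural domain of
`A ↦ tr(g(A))` for a function `g` on `s`. -/
def hermitianSpectrumIn (s : Set ℝ) : Set (Matrix n n 𝕜) :=
  {A | A.IsHermitian ∧ spectrum ℝ A ⊆ s}

theorem mem_hermitianSpectrumIn_iff {s : Set ℝ} {A : Matrix n n 𝕜} (hA : A.IsHermitian) :
    A ∈ hermitianSpectrumIn n 𝕜 s ↔ ∀ i, hA.eigenvalues i ∈ s := by
  rw [← Set.range_subset_iff, ← hA.spectrum_real_eq_range_eigenvalues]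
  exact and_iff_right hA

/-- The trace function `A ↦ tr(g(A))`, with `g(A)` given by the continuous functional calculus.
The real part only serves to make the values real numbers: the trace is real, being `∑ᵢ g(λᵢ(A))`
for Hermitian `A`, and `0` otherwise by the convention of `cfc`. -/
noncomputable def traceFunction (g : ℝ → ℝ) (A : Matrix n n 𝕜) : ℝ :=
  RCLike.re (cfc g A).trace

theorem traceFunction_eq_sum (g : ℝ → ℝ) {A : Matrix n n 𝕜} (hA : A.IsHermitian) :
    traceFunction g A = ∑ i, g (hA.eigenvalues i) := by
  rw [traceFunction, hA.cfc_eq, IsHermitian.cfc, trace_map, trace_diagonal, map_sum]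
  simp only [Function.comp_apply, RCLike.ofReal_re]

theorem map_mem_hermitianSpectrumIn (φ : Matrix m m 𝕜 ≃⋆ₐ[𝕜] Matrix n n 𝕜) {s : Set ℝ}
    {A : Matrix m m 𝕜} (hA : A ∈ hermitianSpectrumIn m 𝕜 s) :
    φ A ∈ hermitianSpectrumIn n 𝕜 s :=
  ⟨hA.1.isSelfAdjoint.map φ,
    (AlgEquiv.spectrum_eq (φ.restrictScalars ℝ) A).trans_subset hA.2⟩

theorem traceFunction_map (φ : Matrix m m 𝕜 ≃⋆ₐ[𝕜] Matrix n n 𝕜) (g : ℝ → ℝ)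
    {A : Matrix m m 𝕜} (hA : A.IsHermitian) :
    traceFunction g (φ A) = traceFunction g A := by
  have hφ : Continuous φ := φ.toAlgEquiv.toLinearMap.continuous_of_finiteDimensional
  have map_cfc : φ (cfc g A) = cfc g (φ A) :=
    StarAlgHomClass.map_cfc (S := 𝕜) φ g A (A.finite_real_spectrum.continuousOn g) hφ
      hA.isSelfAdjoint (hA.isSelfAdjoint.map φ)
  rw [traceFunction, ← map_cfc, trace_map, traceFunction]

theorem re_diag_mem {s : Set ℝ} (hs : Convex ℝ s) {A : Matrix n n 𝕜}
    (hA : A ∈ hermitianSpectrumIn n 𝕜 s) (j : n) : RCLike.re (A j j) ∈ s := by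
  obtain ⟨M, hM, hdiag⟩ := exists_mem_doublyStochastic_re_diag_eq hA.1
  rw [hdiag]
  exact hs.sum_mem (fun _ _ => nonneg_of_mem_doublyStochastic hM)
    (sum_row_of_mem_doublyStochastic hM j) fun i _ => (mem_hermitianSpectrumIn_iff hA.1).1 hA i

theorem sum_map_re_diag_le_traceFunction {s : Set ℝ} {g : ℝ → ℝ} (hg : ConvexOn ℝ s g)
    {A : Matrix n n 𝕜} (hA : A ∈ hermitianSpectrumIn n 𝕜 s) :
    ∑ j, g (RCLike.re (A j j)) ≤ traceFunction g A := by
  obtain ⟨M, hM, hdiag⟩ := exists_mem_doublyStochastic_re_diag_eq hA.1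
  simp only [hdiag, traceFunction_eq_sum g hA.1]
  exact sum_map_sum_smul_le_of_mem_doublyStochastic hg hM
    ((mem_hermitianSpectrumIn_iff hA.1).1 hA)

theorem exists_starAlgEquiv_eigenvalues_combo_eq {A B : Matrix n n 𝕜} {a b : ℝ}
    (h : (a • A + b • B).IsHermitian) :
    ∃ φ : Matrix n n 𝕜 ≃⋆ₐ[𝕜] Matrix n n 𝕜, ∀ j,
      h.eigenvalues j = a • RCLike.re (φ A j j) + b • RCLike.re (φ B j j) := by
  let φ := Unitary.conjStarAlgAut 𝕜 _ (star h.eigenvectorUnitary)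
  have map_combo : φ (a • A + b • B) = a • φ A + b • φ B := by
    rw [map_add]
    congr 1 <;> exact map_smul (φ.restrictScalars ℝ) _ _
  refine ⟨φ, fun j => ?_⟩
  have hdiag : φ (a • A + b • B) = _ := h.conjStarAlgAut_star_eigenvectorUnitary
  rw [map_combo] at hdiag
  simpa [RCLike.smul_re] using congrArg RCLike.re (congrFun₂ hdiag j j).symm

theorem convex_hermitianSpectrumIn {s : Set ℝ} (hs : Convex ℝ s) :
    Convex ℝ (hermitianSpectrumIn n 𝕜 s) := by
  intro A hA B hB a b ha hb hab
  have hC : (a • A + b • B).IsHermitian := (hA.1.smul (.all a)).add (hB.1.smul (.all b))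
  obtain ⟨φ, hφ⟩ := exists_starAlgEquiv_eigenvalues_combo_eq hC
  refine (mem_hermitianSpectrumIn_iff hC).2 fun j => ?_
  rw [hφ]
  exact hs (re_diag_mem hs (map_mem_hermitianSpectrumIn φ hA) j)
    (re_diag_mem hs (map_mem_hermitianSpectrumIn φ hB) j) ha hb hab

theorem convexOn_traceFunction {s : Set ℝ} {g : ℝ → ℝ} (hg : ConvexOn ℝ s g) :
    ConvexOn ℝ (hermitianSpectrumIn n 𝕜 s) (traceFunction g) := by
  refine ⟨convex_hermitianSpectrumIn hg.1, fun A hA B hB a b ha hb hab => ?_⟩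
  have hC := (convex_hermitianSpectrumIn hg.1 hA hB ha hb hab).1
  obtain ⟨φ, hφ⟩ := exists_starAlgEquiv_eigenvalues_combo_eq hC
  have hφA := map_mem_hermitianSpectrumIn φ hA
  have hφB := map_mem_hermitianSpectrumIn φ hB
  calc traceFunction g (a • A + b • B)
      = ∑ j, g (a • RCLike.re (φ A j j) + b • RCLike.re (φ B j j)) := by
        simp only [traceFunction_eq_sum g hC, hφ]
    _ ≤ ∑ j, (a • g (RCLike.re (φ A j j)) + b • g (RCLike.re (φ B j j))) :=
        Finset.sum_le_sum fun j _ =>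
          hg.2 (re_diag_mem hg.1 hφA j) (re_diag_mem hg.1 hφB j) ha hb hab
    _ = a • ∑ j, g (RCLike.re (φ A j j)) + b • ∑ j, g (RCLike.re (φ B j j)) := by
        rw [Finset.sum_add_distrib, Finset.smul_sum, Finset.smul_sum]
    _ ≤ a • traceFunction g (φ A) + b • traceFunction g (φ B) := by
        gcongr
        exacts [sum_map_re_diag_le_traceFunction hg hφA, sum_map_re_diag_le_traceFunction hg hφB]
    _ = a • traceFunction g A + b • traceFunction g B := by
        rw [traceFunction_map φ g hA.1, traceFunction_map φ g hB.1]

open scoped ComplexOrder in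
theorem mem_hermitianSpectrumIn_Ioi_zero {A : Matrix n n 𝕜} :
    A ∈ hermitianSpectrumIn n 𝕜 (Set.Ioi 0) ↔ A.PosDef := by
  have iff_of_isHermitian (hA : A.IsHermitian) :=
    (mem_hermitianSpectrumIn_iff hA).trans hA.posDef_iff_eigenvalues_pos.symm
  exact ⟨fun hA => (iff_of_isHermitian hA.1).1 hA, fun hA => (iff_of_isHermitian hA.1).2 hA⟩

open scoped ComplexOrder in
theorem pos_and_inv_smul_mem_hermitianSpectrumIn_Ioi_zero {v : ℝ} {A : Matrix n n 𝕜} :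
    0 < v ∧ v⁻¹ • A ∈ hermitianSpectrumIn n 𝕜 (Set.Ioi 0) ↔ 0 < v ∧ A.PosDef := by
  refine and_congr_right fun hv => mem_hermitianSpectrumIn_Ioi_zero.trans ?_
  refine ⟨fun h => ?_, fun h => h.smul (inv_pos.2 hv)⟩
  simpa only [smul_inv_smul₀ hv.ne'] using h.smul hv

theorem perspective_convexOn_and_zeta_concaveOn_general {s : Set ℝ} {g : ℝ → ℝ}
    (hg : ConvexOn ℝ s g) :
    ConvexOn ℝ {p : ℝ × Matrix n n 𝕜 | 0 < p.1 ∧ p.1⁻¹ • p.2 ∈ hermitianSpectrumIn n 𝕜 s}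
      (fun p => p.1 * traceFunction g (p.1⁻¹ • p.2)) ∧
    ConcaveOn ℝ
      {p : ℝ × ℝ × Matrix n n 𝕜 | 0 < p.2.1 ∧ p.2.1⁻¹ • p.2.2 ∈ hermitianSpectrumIn n 𝕜 s}
      (fun p => p.1 - p.2.1 * traceFunction g (p.2.1⁻¹ • p.2.2)) := by
  have hpersp := convexOn_perspective (convexOn_traceFunction (n := n) (𝕜 := 𝕜) hg)
  have hzeta := concaveOn_fst_sub_comp_snd hpersp
  exact ⟨hpersp, hzeta⟩

end TraceFunction

theorem phi_eq_traceFunction {d : ℕ} (g : ℝ → ℝ) (A : Matrix (Fin d) (Fin d) ℝ) :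
    phi g A = traceFunction g A := by
  by_cases hA : A.IsHermitian
  · rw [phi, dif_pos hA, traceFunction_eq_sum g hA]
  · rw [phi, dif_neg hA, traceFunction, cfc_apply_of_not_predicate (p := IsSelfAdjoint) A hA,
      trace_zero, map_zero]

/-- If `g` is convex and continuous on `(0, ∞)`, then the perspective function
`(v, W) ↦ v * φ(v⁻¹ W)` is convex on `{(v, W) : v > 0, W ≻ 0}`; equivalently,
`ζ(u, v, W) = u - v * φ(v⁻¹ W)` is concave on `ℝ × (0, ∞) × {W ≻ 0}`. -/
theorem perspective_convexOn_and_zeta_concaveOn {d : ℕ} (g : ℝ → ℝ)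
    (hg_conv : ConvexOn ℝ (Set.Ioi (0 : ℝ)) g)
    (hg_cont : ContinuousOn g (Set.Ioi (0 : ℝ))) :
    ConvexOn ℝ {p : ℝ × Matrix (Fin d) (Fin d) ℝ | 0 < p.1 ∧ p.2.PosDef}
      (fun p => p.1 * phi g (p.1⁻¹ • p.2)) ∧
    ConcaveOn ℝ {p : ℝ × ℝ × Matrix (Fin d) (Fin d) ℝ | 0 < p.2.1 ∧ p.2.2.PosDef}
      (fun p => zeta g p.1 p.2.1 p.2.2) := by
  simpa only [zeta, phi_eq_traceFunction, pos_and_inv_smul_mem_hermitianSpectrumIn_Ioi_zero] using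
    perspective_convexOn_and_zeta_concaveOn_general (n := Fin d) (𝕜 := ℝ) hg_conv
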